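/- Assume m+1 ≠ n and set R_1 = −(1/(m−n+1))(E⊗1 + 1⊗G_1^{gl(m|n)}). Then π^g∘ι^s = Id on U(sl(m+1|n)), and φ^s∘π^g = φ_{R_1} as homomorphisms U(gl(m+1|n)) → D'(m|n)⊗U(gl(m|n)). -/

import Mathlib

set_option maxHeartbeats 1000000
set_option synthInstance.maxHeartbeats 400000

noncomputable section
open scoped TensorProduct

/-- The index set `I = {1,…,m,1̄,…,n̄}` of `gl(m|n)`; `Sum.inl` are the even
(unbarred) indices, `Sum.inr` the odd (barred) ones.  The index set
`Î = {0} ∪ I` of `gl(m+1|n)` is realized as `Ind (m+1) n`, with `0 = Sum.inl 0`. -/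
abbrev Ind (m n : ℕ) := Fin m ⊕ Fin n

/-- Parity of an index, as `0` or `1`. -/
def pI {m n : ℕ} : Ind m n → ℕ := Sum.elim (fun _ => 0) (fun _ => 1)

/-- The total order `1 < ⋯ < m < 1̄ < ⋯ < n̄` on `I` (and, with `m+1` in place of `m`,
the order `0 < 1 < ⋯ < m < 1̄ < ⋯ < n̄` on `Î`). -/
def iltI {m n : ℕ} : Ind m n → Ind m n → Prop
  | Sum.inl a, Sum.inl b => a < b
  | Sum.inl _, Sum.inr _ => True
  | Sum.inr _, Sum.inl _ => False
  | Sum.inr a, Sum.inr b => a < b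

/-- The distinguished index `0` of `Î`. -/
def z0 {m n : ℕ} : Ind (m+1) n := Sum.inl 0

/-- The inclusion `I ↪ Î`. -/
def emb {m n : ℕ} : Ind m n → Ind (m+1) n := Sum.map Fin.succ id

lemma emb_injective {m n : ℕ} : Function.Injective (emb (m := m) (n := n)) := by
  intro a b h
  cases a <;> cases b <;> simp [emb, Fin.succ_inj] at h <;> simp [h]

lemma emb_ne_z0 {m n : ℕ} (a : Ind m n) : emb a ≠ z0 := by
  cases a <;> simp [emb, z0, Fin.succ_ne_zero]

/-- Builds a linear map out of a space with basis `α` from a function on basis vectors. -/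
def mkOp {α M : Type} [AddCommGroup M] [Module ℂ M] (g : α → M) : (α →₀ ℂ) →ₗ[ℂ] M :=
  Finsupp.lsum ℂ fun x => LinearMap.toSpanSingleton ℂ M (g x)

/-- Number of odd variables occurring before position `i`. -/
def cntB {n : ℕ} (b : Fin n → Bool) (i : Fin n) : ℕ :=
  (Finset.univ.filter fun j => j < i ∧ b j = true).card

/-- Number of odd variables occurring. -/
def cntA {n : ℕ} (b : Fin n → Bool) : ℕ := (Finset.univ.filter fun j => b j = true).card


/-- The defining (super-)commutation relations of `gl`:
`e_ij e_kl − (−1)^{(|i|+|j|)(|k|+|l|)} e_kl e_ij = δ_jk e_il − (−1)^{(|i|+|j|)(|k|+|l|)} δ_li e_kj`. -/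
inductive glRel (ι : Type) (p : ι → ℕ) [DecidableEq ι] :
    FreeAlgebra ℂ (ι × ι) → FreeAlgebra ℂ (ι × ι) → Prop
  | basic (i j k l : ι) : glRel ι p
      (FreeAlgebra.ι ℂ (i, j) * FreeAlgebra.ι ℂ (k, l)
        - ((-1 : ℂ) ^ ((p i + p j) * (p k + p l))) •
            (FreeAlgebra.ι ℂ (k, l) * FreeAlgebra.ι ℂ (i, j)))
      ((if j = k then FreeAlgebra.ι ℂ (i, l) else 0)
        - ((-1 : ℂ) ^ ((p i + p j) * (p k + p l))) •
            (if l = i then FreeAlgebra.ι ℂ (k, j) else 0))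

/-- The universal enveloping superalgebra of the general linear Lie superalgebra with
index set `ι` and parity `p`, presented by generators `e_ij` and the super-commutator
relations. -/
abbrev UEA (ι : Type) (p : ι → ℕ) [DecidableEq ι] : Type := RingQuot (glRel ι p)

/-- The generator `e_ij` of `UEA ι p`. -/
def gen {ι : Type} (p : ι → ℕ) [DecidableEq ι] (i j : ι) : UEA ι p :=
  RingQuot.mkAlgHom ℂ (glRel ι p) (FreeAlgebra.ι ℂ (i, j))

/-- Monomials `t_0^{k} t^e t̄^b` of `F = ℂ[t_0^{±1},t_1,…,t_m] ⊗ Λ_n`. -/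
abbrev FMon (m n : ℕ) := ℤ × (Fin m → ℕ) × (Fin n → Bool)

/-- `F = ℂ[t_0^{±1},t_1,…,t_m] ⊗ Λ_n` as the vector space with basis the monomials. -/
abbrev FSp (m n : ℕ) : Type := FMon m n →₀ ℂ

/-- The basis monomial of `F` attached to `x`. -/
def fmono {m n : ℕ} (x : FMon m n) : FSp m n := Finsupp.single x 1

/-- Left multiplication by `t_i/t_0` for an even index `i ∈ {1,…,m}`. -/
def opDivE {m n : ℕ} (i : Fin m) : Module.End ℂ (FSp m n) :=
  mkOp fun x => fmono (x.1 - 1, Function.update x.2.1 i (x.2.1 i + 1), x.2.2)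

/-- Left multiplication by `t_ī/t_0` for an odd index `ī`. -/
def opDivO {m n : ℕ} (i : Fin n) : Module.End ℂ (FSp m n) :=
  mkOp fun x => if x.2.2 i then 0 else
    ((-1 : ℂ) ^ (cntB x.2.2 i)) • fmono (x.1 - 1, x.2.1, Function.update x.2.2 i true)

/-- The operator `t_0 ∂_0`. -/
def opPar0 {m n : ℕ} : Module.End ℂ (FSp m n) :=
  mkOp fun x => (x.1 : ℂ) • fmono x

/-- The operator `t_0 ∂_i` for an even index `i ∈ {1,…,m}`. -/
def opParE {m n : ℕ} (i : Fin m) : Module.End ℂ (FSp m n) :=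
  mkOp fun x => (x.2.1 i : ℂ) • fmono (x.1 + 1, Function.update x.2.1 i (x.2.1 i - 1), x.2.2)

/-- The operator `t_0 ∂_ī` for an odd index `ī`. -/
def opParO {m n : ℕ} (i : Fin n) : Module.End ℂ (FSp m n) :=
  mkOp fun x => if x.2.2 i then
    ((-1 : ℂ) ^ (cntB x.2.2 i)) • fmono (x.1 + 1, x.2.1, Function.update x.2.2 i false) else 0

/-- The multiplication operators `t_i/t_0`, `i ∈ I`. -/
def opDiv {m n : ℕ} : Ind m n → Module.End ℂ (FSp m n) := Sum.elim opDivE opDivO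

/-- The operators `t_0 ∂_i`, `i ∈ Î`. -/
def opPar {m n : ℕ} : Ind (m+1) n → Module.End ℂ (FSp m n) :=
  Sum.elim (Fin.cases opPar0 opParE) opParO

/-- The multiplication operators `t_i/t_0` for `i ∈ Î` (equal to `1` for `i = 0`). -/
def opDivB {m n : ℕ} : Ind (m+1) n → Module.End ℂ (FSp m n) :=
  Sum.elim (Fin.cases 1 opDivE) opDivO

/-- The generators of `D'(m|n)`. -/
def Dgens (m n : ℕ) : Set (Module.End ℂ (FSp m n)) := Set.range opDiv ∪ Set.range opPar

/-- The superalgebra `D'(m|n)` of differential operators on `F`, i.e. the subalgebra of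
operators on `F` generated by `t_i/t_0` (`i ∈ I`) and `t_0∂_i` (`i ∈ Î`). -/
def Dprime (m n : ℕ) : Subalgebra ℂ (Module.End ℂ (FSp m n)) := Algebra.adjoin ℂ (Dgens m n)

/-- `t_i/t_0` as an element of `D'(m|n)`. -/
def tdiv {m n : ℕ} (i : Ind m n) : Dprime m n :=
  ⟨opDiv i, Algebra.subset_adjoin (Or.inl ⟨i, rfl⟩)⟩

/-- `t_0∂_i` as an element of `D'(m|n)`. -/
def tpar {m n : ℕ} (i : Ind (m+1) n) : Dprime m n :=
  ⟨opPar i, Algebra.subset_adjoin (Or.inr ⟨i, rfl⟩)⟩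

/-- `t_i/t_0` for `i ∈ Î` as an element of `D'(m|n)`. -/
def tdivB {m n : ℕ} : Ind (m+1) n → Dprime m n :=
  Sum.elim (Fin.cases 1 fun i => tdiv (Sum.inl i)) fun i => tdiv (Sum.inr i)

/-- The operator `t_a∂_b = (t_a/t_0)(t_0∂_b)` of `D'(m|n)`, for `a, b ∈ Î`. -/
def tdel {m n : ℕ} (a b : Ind (m+1) n) : Dprime m n := tdivB a * tpar b

/-- The Euler operator `E = Σ_{i∈Î} t_i∂_i ∈ D'(m|n)`. -/
def En (m n : ℕ) : Dprime m n := ∑ i : Ind (m+1) n, tdel i i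

noncomputable instance instDprimeRing (m n : ℕ) : Ring (Dprime m n) :=
  @Subalgebra.toRing ℂ (Module.End ℂ (FSp m n)) inferInstance inferInstance inferInstance _

noncomputable instance instDprimeAlgebra (m n : ℕ) : Algebra ℂ (Dprime m n) :=
  @Subalgebra.algebra ℂ (Module.End ℂ (FSp m n)) inferInstance inferInstance inferInstance _

/-- The super tensor product `D'(m|n) ⊗ U(gl(m|n))`, axiomatized: an algebra `T` together
with algebra maps `d ↦ d⊗1`, `u ↦ 1⊗u`, such that the induced linear map
`D'(m|n) ⊗_ℂ U(gl(m|n)) → T` is a linear isomorphism and such that the Koszul sign rule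
`(1⊗u)(d⊗1) = (−1)^{|u||d|}(d⊗1)(1⊗u)` holds on (super-)generators. -/
structure SuperTensor (m n : ℕ) where
  T : Type
  [ringT : Ring T]
  [algT : Algebra ℂ T]
  inD : Dprime m n →ₐ[ℂ] T
  inU : UEA (Ind m n) pI →ₐ[ℂ] T
  equiv : ((Dprime m n) ⊗[ℂ] (UEA (Ind m n) pI)) ≃ₗ[ℂ] T
  equiv_tmul : ∀ (d : Dprime m n) (u : UEA (Ind m n) pI), equiv (d ⊗ₜ u) = inD d * inU u
  comm_div : ∀ (i j k : Ind m n),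
    inU (gen pI i j) * inD (tdiv k) =
      ((-1 : ℂ) ^ ((pI i + pI j) * pI k)) • (inD (tdiv k) * inU (gen pI i j))
  comm_par : ∀ (i j : Ind m n) (k : Ind (m+1) n),
    inU (gen pI i j) * inD (tpar k) =
      ((-1 : ℂ) ^ ((pI i + pI j) * pI k)) • (inD (tpar k) * inU (gen pI i j))

attribute [instance] SuperTensor.ringT SuperTensor.algT

/-- The predicate expressing that `φ : U(gl(m+1|n)) → D'(m|n) ⊗ U(gl(m|n))` is given on the
generators `e_ab` by the formulas of Theorem 3.1 (for the central element `R`). -/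
def IsPhi {m n : ℕ} (ST : SuperTensor m n) (R : ST.T)
    (φ : UEA (Ind (m+1) n) pI →ₐ[ℂ] ST.T) : Prop :=
  (∀ a b : Ind m n, φ (gen pI (emb a) (emb b)) =
      ST.inD (tdel (emb a) (emb b)) + ST.inU (gen pI a b)
        + (if a = b then ((-1 : ℂ) ^ (pI a * pI b)) • R else 0)) ∧
  (∀ a : Ind m n, φ (gen pI (emb a) z0) =
      ST.inD (tdel (emb a) z0)
        - ∑ j : Ind m n, ((-1 : ℂ) ^ (pI a * pI j)) • (ST.inD (tdiv j) * ST.inU (gen pI a j))) ∧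
  (∀ b : Ind m n, φ (gen pI z0 (emb b)) = ST.inD (tdel z0 (emb b))) ∧
  (φ (gen pI z0 z0) = ST.inD (tdel z0 z0) + R)

/-- The generating set of `U(sl(m+1|n))` inside `U(gl(m+1|n))`: the `e_ij` with `i ≠ j`
together with `e_00 − (−1)^{|a|} e_aa` for `a ∈ I`. -/
def slSet (m n : ℕ) : Set (UEA (Ind (m+1) n) pI) :=
  {x | (∃ i j : Ind (m+1) n, i ≠ j ∧ x = gen pI i j) ∨
    (∃ a : Ind m n, x = gen pI z0 z0 - ((-1 : ℂ) ^ (pI a)) • gen pI (emb a) (emb a))}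

/-- `U(sl(m+1|n))`, realized as the subalgebra of `U(gl(m+1|n))` generated by `sl(m+1|n)`. -/
def Usl (m n : ℕ) : Subalgebra ℂ (UEA (Ind (m+1) n) pI) := Algebra.adjoin ℂ (slSet m n)

lemma mem_gen_ne {m n : ℕ} {i j : Ind (m+1) n} (h : i ≠ j) : gen pI i j ∈ Usl m n :=
  Algebra.subset_adjoin (Or.inl ⟨i, j, h, rfl⟩)

lemma mem_h {m n : ℕ} (a : Ind m n) :
    gen pI z0 z0 - ((-1 : ℂ) ^ (pI a)) • gen pI (emb a) (emb a) ∈ Usl m n :=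
  Algebra.subset_adjoin (Or.inr ⟨a, rfl⟩)

/-- The predicate expressing that `ψ : U(sl(m+1|n)) → D'(m|n) ⊗ U(gl(m|n))` is given on the
generators by the formulas of Corollary 3.2 (the homomorphism `φ^s`). -/
def IsPhiS {m n : ℕ} (ST : SuperTensor m n) (ψ : Usl m n →ₐ[ℂ] ST.T) : Prop :=
  (∀ (a b : Ind m n) (h : a ≠ b),
    ψ ⟨gen pI (emb a) (emb b), mem_gen_ne fun he => h (emb_injective he)⟩ =
      ST.inD (tdel (emb a) (emb b)) + ST.inU (gen pI a b)) ∧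
  (∀ a : Ind m n, ψ ⟨gen pI (emb a) z0, mem_gen_ne (emb_ne_z0 a)⟩ =
      ST.inD (tdel (emb a) z0)
        - ∑ j : Ind m n, ((-1 : ℂ) ^ (pI a * pI j)) • (ST.inD (tdiv j) * ST.inU (gen pI a j))) ∧
  (∀ b : Ind m n, ψ ⟨gen pI z0 (emb b), mem_gen_ne (Ne.symm (emb_ne_z0 b))⟩ =
      ST.inD (tdel z0 (emb b))) ∧
  (∀ a : Ind m n, ψ ⟨gen pI z0 z0 - ((-1 : ℂ) ^ (pI a)) • gen pI (emb a) (emb a), mem_h a⟩ =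
      ST.inD (tdel (m:=m) (n:=n) z0 z0 - ((-1 : ℂ) ^ (pI a)) • tdel (emb a) (emb a))
        - ((-1 : ℂ) ^ (pI a)) • ST.inU (gen pI a a))

/-- The first Gelfand invariant `G₁ = Σ_i e_ii`. -/
def G1 (ι : Type) (p : ι → ℕ) [DecidableEq ι] [Fintype ι] : UEA ι p := ∑ i : ι, gen p i i

/-- The distinguished central element `R₁ = −(1/(m−n+1))(E⊗1 + 1⊗G₁)`. -/
def R1elt {m n : ℕ} (ST : SuperTensor m n) : ST.T :=
  -(1 / ((m : ℂ) - n + 1)) • (ST.inD (En m n) + ST.inU (G1 (Ind m n) pI))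

lemma sgn_sq {m n : ℕ} (a : Ind m n) : ((-1 : ℂ) ^ (pI a)) * ((-1 : ℂ) ^ (pI a)) = 1 := by
  cases a <;> simp [pI]

lemma sgn_mul {m n : ℕ} (a : Ind m n) : ((-1 : ℂ) ^ (pI a * pI a)) = ((-1 : ℂ) ^ (pI a)) := by
  cases a <;> simp [pI]

lemma sgn_sum (m n : ℕ) : ∑ a : Ind m n, ((-1 : ℂ) ^ (pI a)) = (m : ℂ) - n := by
  simp [Fintype.sum_sum_type, pI, sub_eq_add_neg]

lemma pI_emb {m n : ℕ} (a : Ind m n) : pI (emb a) = pI a := by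
  cases a <;> simp [pI, emb]

lemma pI_z0 {m n : ℕ} : pI (z0 : Ind (m+1) n) = 0 := by
  simp [pI, z0]

lemma sum_ind {m n : ℕ} {M : Type*} [AddCommMonoid M] (f : Ind (m+1) n → M) :
    ∑ i, f i = f z0 + ∑ a : Ind m n, f (emb a) := by
  simp only [Fintype.sum_sum_type, Fin.sum_univ_succ, emb, z0, Sum.map_inl, Sum.map_inr, id, add_assoc]

lemma ind_cases {m n : ℕ} (i : Ind (m+1) n) : i = z0 ∨ ∃ a, i = emb a := by
  rcases i with i | i
  · refine Fin.cases (Or.inl rfl) (fun j => Or.inr ⟨Sum.inl j, rfl⟩) i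
  · exact Or.inr ⟨Sum.inr i, rfl⟩

lemma uea_ext {ι : Type} {p : ι → ℕ} [DecidableEq ι] {A : Type*} [Ring A] [Algebra ℂ A]
    (f g : UEA ι p →ₐ[ℂ] A) (h : ∀ i j, f (gen p i j) = g (gen p i j)) : f = g := by
  apply RingQuot.ringQuot_ext'
  apply FreeAlgebra.hom_ext
  funext x
  exact h x.1 x.2

lemma aux_sum {m n : ℕ} {M : Type*} [AddCommGroup M] [Module ℂ M] (x : M) (y : Ind m n → M) :
    ∑ a : Ind m n, ((-1 : ℂ) ^ (pI a)) • (x - ((-1 : ℂ) ^ (pI a)) • y a)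
      = ((m : ℂ) - n) • x - ∑ a, y a := by
  simp only [smul_sub, smul_smul, sgn_sq, one_smul, Finset.sum_sub_distrib, ← Finset.sum_smul,
    sgn_sum]

/-- Proposition 3.3.  Assume `m+1 ≠ n` and let
`R₁ = −(1/(m−n+1))(E⊗1 + 1⊗G₁^{gl(m|n)})`.  Then `π^g ∘ ι^s = Id` on `U(sl(m+1|n))` and
`φ^s ∘ π^g = φ_{R₁}` on `U(gl(m+1|n))`. -/
theorem stmt4 (m n : ℕ) (hmn : m + 1 ≠ n) (ST : SuperTensor m n)
    (πg : UEA (Ind (m+1) n) pI →ₐ[ℂ] Usl m n)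
    (hπ : ∀ i j : Ind (m+1) n, (πg (gen pI i j) : UEA (Ind (m+1) n) pI) =
      gen pI i j - (if i = j then
        (((-1 : ℂ) ^ (pI i)) / ((m : ℂ) + 1 - n)) • G1 (Ind (m+1) n) pI else 0))
    (ψ : Usl m n →ₐ[ℂ] ST.T) (hψ : IsPhiS ST ψ)
    (φ : UEA (Ind (m+1) n) pI →ₐ[ℂ] ST.T) (hφ : IsPhi ST (R1elt ST) φ) :
    (∀ x : Usl m n, πg (x : UEA (Ind (m+1) n) pI) = x) ∧
    (∀ x : UEA (Ind (m+1) n) pI, ψ (πg x) = φ x) := by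
  have hc : ((m : ℂ) + 1 - n) ≠ 0 := by
    intro h
    apply hmn
    have : ((m + 1 : ℕ) : ℂ) = (n : ℕ) := by push_cast; linear_combination h
    exact_mod_cast this
  have hπne : ∀ (i j : Ind (m+1) n) (h : i ≠ j), πg (gen pI i j) = ⟨gen pI i j, mem_gen_ne h⟩ := by
    intro i j h
    apply Subtype.ext
    rw [hπ, if_neg h, sub_zero]
  have hπh : ∀ a : Ind m n, πg (gen pI z0 z0 - ((-1 : ℂ) ^ (pI a)) • gen pI (emb a) (emb a))
      = ⟨gen pI z0 z0 - ((-1 : ℂ) ^ (pI a)) • gen pI (emb a) (emb a), mem_h a⟩ := by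
    intro a
    apply Subtype.ext
    rw [map_sub, map_smul]
    change (πg (gen pI z0 z0) : UEA (Ind (m+1) n) pI)
      - ((-1 : ℂ) ^ (pI a)) • (πg (gen pI (emb a) (emb a)) : UEA (Ind (m+1) n) pI) = _
    rw [hπ, hπ, if_pos rfl, if_pos rfl, pI_emb, pI_z0, smul_sub, smul_smul, mul_div_assoc',
      sgn_sq, pow_zero]
    exact sub_sub_sub_cancel_right _ _ _
  have h1 : ∀ x : Usl m n, πg (x : UEA (Ind (m+1) n) pI) = x := by
    rintro ⟨x, hx⟩
    apply Subtype.ext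
    change ((Usl m n).val.comp πg) x = AlgHom.id ℂ _ x
    refine (AlgHom.eqOn_adjoin_iff (φ := (Usl m n).val.comp πg) (ψ := AlgHom.id ℂ _)).2 ?_ hx
    rintro y (⟨i, j, h, rfl⟩ | ⟨a, rfl⟩)
    · exact congrArg Subtype.val (hπne i j h)
    · exact congrArg Subtype.val (hπh a)
  refine ⟨h1, ?_⟩
  obtain ⟨ψ1, ψ2, ψ3, ψ4⟩ := hψ
  obtain ⟨φ1, φ2, φ3, φ4⟩ := hφ
  have hc' : (m : ℂ) - n + 1 = (m : ℂ) + 1 - n := by ring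
  have hR : ((m : ℂ) + 1 - n) • R1elt ST
      = -(ST.inD (tdel z0 z0) + ∑ a : Ind m n, (ST.inD (tdel (emb a) (emb a))
          + ST.inU (gen pI a a))) := by
    rw [R1elt, hc', smul_smul, mul_neg, mul_one_div_cancel hc, neg_one_smul, En, sum_ind, G1,
      map_add, map_sum, map_sum, Finset.sum_add_distrib, add_assoc]
  have hh : ∀ a : Ind m n, ψ (πg (gen pI z0 z0 - ((-1 : ℂ) ^ (pI a)) • gen pI (emb a) (emb a)))
      = ST.inD (tdel z0 z0) - ((-1 : ℂ) ^ (pI a)) •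
        (ST.inD (tdel (emb a) (emb a)) + ST.inU (gen pI a a)) := by
    intro a
    rw [hπh, ψ4, map_sub, map_smul, smul_add, sub_sub]
  have hz : ψ (πg (gen pI z0 z0)) = φ (gen pI z0 z0) := by
    have e1 : πg (G1 (Ind (m+1) n) pI) = 0 := by
      apply Subtype.ext
      rw [G1, map_sum, AddSubmonoidClass.coe_finsetSum]
      simp only [hπ, if_true]
      rw [Finset.sum_sub_distrib, ← Finset.sum_smul, ← Finset.sum_div, sgn_sum]
      push_cast
      rw [div_self hc, one_smul, G1, sub_self]
    have e0 : ψ (πg (gen pI z0 z0)) + ∑ a : Ind m n, ψ (πg (gen pI (emb a) (emb a))) = 0 := by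
      have e5 := congrArg ψ e1
      rw [map_zero, G1, map_sum, map_sum, sum_ind] at e5
      exact e5
    have e2 : ∑ a : Ind m n, ((-1 : ℂ) ^ (pI a)) • (ST.inD (tdel z0 z0) - ((-1 : ℂ) ^ (pI a)) •
        (ST.inD (tdel (emb a) (emb a)) + ST.inU (gen pI a a)))
        = ((m : ℂ) + 1 - n) • ψ (πg (gen pI z0 z0)) := by
      simp only [← hh, map_sub, map_smul]
      rw [aux_sum, ← hc', add_smul, one_smul, eq_neg_of_add_eq_zero_right e0]
      abel
    rw [aux_sum] at e2
    have e3 : ((m : ℂ) + 1 - n) • ψ (πg (gen pI z0 z0))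
        = ((m : ℂ) + 1 - n) • φ (gen pI z0 z0) := by
      rw [← e2, φ4, smul_add, hR, ← hc', add_smul, one_smul]
      abel
    exact smul_right_injective _ hc e3
  have hfin : ψ.comp πg = φ := by
    apply uea_ext
    intro i j
    change ψ (πg (gen pI i j)) = φ (gen pI i j)
    rcases ind_cases i with rfl | ⟨a, rfl⟩ <;> rcases ind_cases j with rfl | ⟨b, rfl⟩
    · exact hz
    · rw [hπne _ _ (emb_ne_z0 b).symm, ψ3, φ3]
    · rw [hπne _ _ (emb_ne_z0 a), ψ2, φ2]
    · by_cases hab : a = b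
      · subst hab
        have e := hh a
        rw [map_sub, map_sub, map_smul, map_smul, hz, φ4] at e
        rw [φ1, if_pos rfl, sgn_mul]
        have e' : ((-1 : ℂ) ^ (pI a)) • ψ (πg (gen pI (emb a) (emb a)))
            = R1elt ST + ((-1 : ℂ) ^ (pI a)) •
        (ST.inD (tdel (emb a) (emb a)) + ST.inU (gen pI a a)) := by
          have := sub_eq_iff_eq_add.1 e
          rw [sub_add_eq_add_sub] at this
          have h2 := eq_sub_iff_add_eq.1 this
          rw [add_assoc] at h2
          exact (add_left_cancel ((add_assoc _ _ _).symm.trans ((add_assoc _ _ _).trans h2))).symm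
        have e4 := congrArg (fun x => ((-1 : ℂ) ^ (pI a)) • x) e'
        simp only [smul_add, smul_smul, sgn_sq, one_smul] at e4
        rw [e4]
        abel
      · rw [hπne _ _ (fun h => hab (emb_injective h)), ψ1 a b hab, φ1, if_neg hab, add_zero]
  intro x
  exact DFunLike.congr_fun hfin x
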